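/- arXiv:1208.0815 — 3 statements merged into one kernel-verified Lean document; each statement's English description precedes it below -/
import Mathlib

section
/- Let S be a set, let g : S → S and h : S → ℝ be maps with h(x) ≥ 1 for all x ∈ S, and let a ≥ 1 and c ≥ 1 be real constants. Suppose that for all x ∈ S one has h(g(x)) ≤ a·h(x) + c·√(h(x)). Then for all x ∈ S and all integers n ≥ 0, h(gⁿ(x)) ≤ aⁿ·( h(x) + (2√2·c)ⁿ·√(h(x)) ), where gⁿ denotes the n-fold iterate of g. -/
/-- If `h ≥ 1`, `a, c ≥ 1`, and `h(g(x)) ≤ a·h(x) + c·√(h(x))` for all `x`, then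
`h(gⁿ(x)) ≤ aⁿ·(h(x) + (2√2·c)ⁿ·√(h(x)))` for all `x` and `n`. -/
theorem iterate_height_bound {S : Type*} (g : S → S) (h : S → ℝ)
    (h1 : ∀ x, 1 ≤ h x) (a c : ℝ) (ha : 1 ≤ a) (hc : 1 ≤ c)
    (hg : ∀ x, h (g x) ≤ a * h x + c * Real.sqrt (h x)) :
    ∀ (x : S) (n : ℕ),
      h (g^[n] x) ≤ a ^ n * (h x + (2 * Real.sqrt 2 * c) ^ n * Real.sqrt (h x)) := by
  intro x n
  induction n with
  | zero =>
    have := Real.sqrt_nonneg (h x)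
    simp
  | succ n ih =>
    rw [Function.iterate_succ_apply']
    have hstep := hg (g^[n] x)
    set s := Real.sqrt (h x) with hs
    have hs1 : 1 ≤ s := Real.one_le_sqrt.mpr (h1 x)
    have hss : h x = s ^ 2 := (Real.sq_sqrt (by linarith [h1 x])).symm
    set r := Real.sqrt 2 with hr
    have hr1 : 1 ≤ r := Real.one_le_sqrt.mpr (by norm_num)
    have hrr : r ^ 2 = 2 := Real.sq_sqrt (by norm_num)
    have hrc : 1 ≤ r * c := one_le_mul_of_one_le_of_one_le hr1 hc
    have hM : 1 ≤ (2 * r * c) ^ n := one_le_pow₀ (by linarith)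
    have hA : 1 ≤ a ^ n := one_le_pow₀ ha
    rw [pow_succ, pow_succ]
    generalize (2 * r * c) ^ n = M at *
    generalize a ^ n = A at *
    rw [hss] at ih ⊢
    have hMs : 0 ≤ M * s := by positivity
    have hAMs : 0 ≤ A * (M * s) := by positivity
    have e1 : s ^ 2 + M * s ≤ 2 * (M * s) ^ 2 := by
      have h2 : s ≤ M * s := by nlinarith
      have h3 : s ^ 2 ≤ (M * s) ^ 2 := by gcongr
      have h4 : M * s ≤ (M * s) ^ 2 := by nlinarith
      linarith
    have e2 : Real.sqrt (h (g^[n] x)) ≤ r * (A * (M * s)) := by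
      apply Real.sqrt_le_iff.mpr
      refine ⟨by positivity, ih.trans ?_⟩
      calc A * (s ^ 2 + M * s) ≤ A * (2 * (M * s) ^ 2) := by gcongr
        _ ≤ A ^ 2 * (2 * (M * s) ^ 2) := by
          gcongr
          nlinarith
        _ = (r * (A * (M * s))) ^ 2 := by rw [mul_pow r, hrr]; ring
    have e3 : c * Real.sqrt (h (g^[n] x)) ≤ c * (r * (A * (M * s))) := by gcongr
    have e4 : a * h (g^[n] x) ≤ a * (A * (s ^ 2 + M * s)) := by gcongr
    have e5 : r * c * (A * (M * s)) ≤ a * ((2 * (r * c) - 1) * (A * (M * s))) := by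
      have h5 : r * c * (A * (M * s)) ≤ (2 * (r * c) - 1) * (A * (M * s)) := by
        gcongr
        linarith
      have h6 : 0 ≤ (2 * (r * c) - 1) * (A * (M * s)) := mul_nonneg (by linarith) hAMs
      nlinarith
    linarith
end

section
/- Let h : ℕ → ℝ be a sequence with h(n) ≥ 1 for all n, and suppose that h(n)^{1/n} converges to a real number α with α > 1 as n → ∞. Then for every real B, the set {n ∈ ℕ : h(n) ≤ B} is finite, and lim_{B→∞} #{n ∈ ℕ : h(n) ≤ B} / log B = 1 / log α. -/
open Filter

/-- If `h(n) ≥ 1` and `h(n)^(1/n) → α > 1`, then for every real `B` the set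
`{n : h(n) ≤ B}` is finite, and its cardinality is asymptotic to `log B / log α`
as `B → ∞`. -/
theorem orbit_counting_of_arithmetic_degree (h : ℕ → ℝ) (h1 : ∀ n, 1 ≤ h n)
    (α : ℝ) (hα : 1 < α)
    (hlim : Tendsto (fun n : ℕ => h n ^ ((1 : ℝ) / n)) atTop (nhds α)) :
    (∀ B : ℝ, {n : ℕ | h n ≤ B}.Finite) ∧
    Tendsto (fun B : ℝ => ({n : ℕ | h n ≤ B}.ncard : ℝ) / Real.log B) atTop
      (nhds (1 / Real.log α)) := by
  have hL : 0 < Real.log α := Real.log_pos hα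
  have hpos : ∀ n, 0 < h n := fun n => lt_of_lt_of_le one_pos (h1 n)
  have hg : Tendsto (fun n : ℕ => Real.log (h n) / n) atTop (nhds (Real.log α)) := by
    have := hlim.log (by positivity)
    refine this.congr fun n => ?_
    rw [Real.log_rpow (hpos n)]
    ring
  -- upper bound on indices
  have hup : ∀ d : ℝ, 1 / Real.log α < d →
      ∃ N : ℕ, ∀ n, N ≤ n → (n : ℝ) ≤ d * Real.log (h n) := by
    intro d hd
    have hd0 : 0 < d := lt_trans (by positivity) hd
    have hlt : 1 / d < Real.log α := (one_div_lt hL hd0).1 hd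
    obtain ⟨N, hN⟩ := eventually_atTop.1 ((hg.eventually (lt_mem_nhds hlt)).and
      (eventually_gt_atTop 0))
    refine ⟨N, fun n hn => ?_⟩
    obtain ⟨h2, h3⟩ := hN n hn
    have h3' : (0 : ℝ) < n := by exact_mod_cast h3
    rw [div_lt_div_iff₀ hd0 h3'] at h2
    linarith
  have hlo : ∀ d : ℝ, 0 < d → d < 1 / Real.log α →
      ∃ N : ℕ, ∀ n, N ≤ n → d * Real.log (h n) ≤ n := by
    intro d hd0 hd
    have hlt : Real.log α < 1 / d := (lt_one_div hd0 hL).1 hd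
    obtain ⟨N, hN⟩ := eventually_atTop.1 ((hg.eventually (gt_mem_nhds hlt)).and
      (eventually_gt_atTop 0))
    refine ⟨N, fun n hn => ?_⟩
    obtain ⟨h2, h3⟩ := hN n hn
    have h3' : (0 : ℝ) < n := by exact_mod_cast h3
    rw [div_lt_div_iff₀ h3' hd0] at h2
    linarith
  have hsub : ∀ d : ℝ, 1 / Real.log α < d → ∃ N : ℕ, ∀ B : ℝ,
      {n : ℕ | h n ≤ B} ⊆ (Finset.range (N + (⌊d * Real.log B⌋₊ + 1)) : Set ℕ) := by
    intro d hd
    have hd0 : 0 < d := lt_trans (by positivity) hd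
    obtain ⟨N, hN⟩ := hup d hd
    refine ⟨N, fun B n hn => ?_⟩
    simp only [Set.mem_setOf_eq] at hn
    simp only [Finset.coe_range, Set.mem_Iio]
    by_cases hc : N ≤ n
    · have h2 : (n : ℝ) ≤ d * Real.log B :=
        (hN n hc).trans (mul_le_mul_of_nonneg_left (Real.log_le_log (hpos n) hn) hd0.le)
      have := Nat.le_floor h2
      omega
    · omega
  have hfin : ∀ B : ℝ, {n : ℕ | h n ≤ B}.Finite := by
    intro B
    obtain ⟨N, hN⟩ := hsub (1 / Real.log α + 1) (by linarith)
    exact (Finset.finite_toSet _).subset (hN B)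
  refine ⟨hfin, ?_⟩
  rw [tendsto_order]
  constructor
  · intro a ha
    obtain ⟨d, hd1, hd2⟩ := exists_between (max_lt ha (show 0 < 1 / Real.log α by positivity))
    have had : a < d := (le_max_left _ _).trans_lt hd1
    have hd0 : 0 < d := (le_max_right _ _).trans_lt hd1
    obtain ⟨N, hN⟩ := hlo d hd0 hd2
    filter_upwards [Real.tendsto_log_atTop.eventually_gt_atTop (N / (d - a)),
      eventually_gt_atTop 1] with B hB hB1
    have hlB : 0 < Real.log B := Real.log_pos hB1
    rw [lt_div_iff₀ hlB]
    rw [div_lt_iff₀ (by linarith)] at hB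
    have hss : (Finset.Ico N (⌊d * Real.log B⌋₊ + 1) : Set ℕ) ⊆ {n : ℕ | h n ≤ B} := by
      intro n hn
      simp only [Finset.coe_Ico, Set.mem_Ico] at hn
      have h2 : (n : ℝ) ≤ d * Real.log B :=
        (Nat.le_floor_iff (by positivity)).1 (by omega)
      have h3 := (hN n hn.1).trans h2
      have h4 := le_of_mul_le_mul_left h3 hd0
      exact (Real.log_le_log_iff (hpos n) (by linarith)).1 h4
    have h5 := Set.ncard_le_ncard hss (hfin B)
    rw [Set.ncard_coe_finset, Nat.card_Ico] at h5
    have h6 : ⌊d * Real.log B⌋₊ + 1 ≤ {n : ℕ | h n ≤ B}.ncard + N := by omega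
    have h7 : ((⌊d * Real.log B⌋₊ : ℝ) + 1) ≤ ({n : ℕ | h n ≤ B}.ncard : ℝ) + N := by
      exact_mod_cast h6
    have h8 := Nat.lt_floor_add_one (d * Real.log B)
    nlinarith
  · intro a ha
    obtain ⟨d, hd1, hd2⟩ := exists_between ha
    have hd0 : 0 < d := lt_trans (by positivity) hd1
    obtain ⟨N, hN⟩ := hsub d hd1
    filter_upwards [Real.tendsto_log_atTop.eventually_gt_atTop ((N + 1) / (a - d)),
      eventually_gt_atTop 1] with B hB hB1
    have hlB : 0 < Real.log B := Real.log_pos hB1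
    rw [div_lt_iff₀ hlB]
    rw [div_lt_iff₀ (by linarith)] at hB
    have h5 := Set.ncard_le_ncard (hN B) (Finset.finite_toSet _)
    rw [Set.ncard_coe_finset, Finset.card_range] at h5
    have h7 : ({n : ℕ | h n ≤ B}.ncard : ℝ) ≤ N + ((⌊d * Real.log B⌋₊ : ℝ) + 1) := by
      exact_mod_cast h5
    have h8 := Nat.floor_le (show 0 ≤ d * Real.log B by positivity)
    nlinarith
end

section
/- Let r ≥ 1, let C ⊆ ℝ^r be a closed convex cone that is pointed (C ∩ (−C) = {0}) and has nonempty interior, and let T : ℝ^r → ℝ^r be a linear map with T(C) ⊆ C. Then C contains a nonzero vector v with T(v) = ρ(T)·v, where ρ(T) denotes the spectral radius of T, i.e., the maximum of the absolute values of the complex eigenvalues of (a matrix representing) T. -/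
open Filter Topology in
theorem gelfand_decay {r : ℕ} [Nonempty (Fin r)] (A : Matrix (Fin r) (Fin r) ℂ) :
    ∃ μ : ℂ, (∃ z : Fin r → ℂ, z ≠ 0 ∧ A.mulVec z = μ • z) ∧
      (spectralRadius ℂ A).toReal = ‖μ‖ ∧
      ∀ l : ℝ, ‖μ‖ < l → ∀ w : Fin r → ℂ,
        Tendsto (fun n : ℕ => l⁻¹ ^ n * ‖(A ^ n).mulVec w‖) atTop (𝓝 0) := by
  let : NormedRing (Matrix (Fin r) (Fin r) ℂ) := Matrix.linftyOpNormedRing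
  let : NormedAlgebra ℂ (Matrix (Fin r) (Fin r) ℂ) := Matrix.linftyOpNormedAlgebra
  have : CompleteSpace (Matrix (Fin r) (Fin r) ℂ) := FiniteDimensional.complete ℂ _
  obtain ⟨μ, hμ, hμr⟩ := spectrum.exists_nnnorm_eq_spectralRadius A
  refine ⟨μ, ?_, ?_, ?_⟩
  · rw [← Matrix.spectrum_toLin', ← Module.End.hasEigenvalue_iff_mem_spectrum] at hμ
    obtain ⟨z, hz⟩ := hμ.exists_hasEigenvector
    exact ⟨z, hz.2, by simpa using hz.apply_eq_smul⟩
  · rw [← hμr]; simp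
  · intro l hl w
    obtain ⟨q, hq1, hq2⟩ := exists_between hl
    have hq0 : 0 < q := lt_of_le_of_lt (norm_nonneg _) hq1
    have hl0 : 0 < l := hq0.trans hq2
    have hG := spectrum.pow_norm_pow_one_div_tendsto_nhds_spectralRadius A
    have hlt : spectralRadius ℂ A < ENNReal.ofReal q := by
      rw [← hμr, ← ENNReal.ofReal_coe_nnreal, coe_nnnorm]
      exact (ENNReal.ofReal_lt_ofReal_iff hq0).2 hq1
    have hev := hG.eventually (gt_mem_nhds hlt)
    have hlim : Tendsto (fun n : ℕ => (q / l) ^ n * ‖w‖) atTop (𝓝 0) := by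
      have := (tendsto_pow_atTop_nhds_zero_of_lt_one (r := q / l) (by positivity)
        ((div_lt_one hl0).2 hq2)).mul_const ‖w‖
      simpa using this
    refine squeeze_zero' (Eventually.of_forall fun n => by positivity) ?_ hlim
    filter_upwards [hev, eventually_gt_atTop 0] with n hn hn0
    have h1 : ‖A ^ n‖ ^ (1 / n : ℝ) < q := (ENNReal.ofReal_lt_ofReal_iff hq0).1 hn
    have h2 : ‖A ^ n‖ ≤ q ^ n := by
      have h3 := pow_le_pow_left₀ (by positivity) h1.le n
      rwa [one_div, Real.rpow_inv_natCast_pow (norm_nonneg _) hn0.ne'] at h3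
    have h4 : ‖(A ^ n).mulVec w‖ ≤ ‖A ^ n‖ * ‖w‖ := Matrix.linfty_opNorm_mulVec _ _
    calc l⁻¹ ^ n * ‖(A ^ n).mulVec w‖ ≤ l⁻¹ ^ n * (q ^ n * ‖w‖) := by
          gcongr
          exact h4.trans (by gcongr)
      _ = (q / l) ^ n * ‖w‖ := by rw [div_eq_mul_inv, mul_pow]; ring

open Filter Topology in
/-- Birkhoff's Perron–Frobenius-type theorem: a closed, pointed convex cone
`C ⊆ ℝ^r` with nonempty interior that is preserved by a linear map `T` contains
a nonzero eigenvector of `T` whose eigenvalue is the spectral radius of `T`,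
i.e., the maximum absolute value of the complex eigenvalues of a matrix
representing `T`. -/
theorem birkhoff_cone_eigenvector {r : ℕ} (hr : 1 ≤ r)
    (C : Set (Fin r → ℝ)) (hclosed : IsClosed C) (hconv : Convex ℝ C)
    (hcone : ∀ t : ℝ, 0 ≤ t → ∀ v ∈ C, t • v ∈ C)
    (hpointed : C ∩ (-C) = {0}) (hint : (interior C).Nonempty)
    (T : (Fin r → ℝ) →ₗ[ℝ] (Fin r → ℝ)) (hT : ∀ v ∈ C, T v ∈ C) :
    ∃ v ∈ C, v ≠ 0 ∧
      T v = (spectralRadius ℂ ((LinearMap.toMatrix' T).map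
        (algebraMap ℝ ℂ))).toReal • v := by
  have : Nonempty (Fin r) := ⟨⟨0, hr⟩⟩
  set A := (LinearMap.toMatrix' T).map (algebraMap ℝ ℂ) with hA
  obtain ⟨μ, ⟨z₀, hz₀, hAz₀⟩, hρ, hdecay⟩ := gelfand_decay A
  rw [hρ]
  set ρ := ‖μ‖ with hρdef
  have hρ0 : 0 ≤ ρ := norm_nonneg _
  have hadd : ∀ x ∈ C, ∀ y ∈ C, x + y ∈ C := by
    intro x hx y hy
    have h := hcone 2 (by norm_num) _
      (hconv hx hy (by norm_num : (0:ℝ) ≤ 1/2) (by norm_num : (0:ℝ) ≤ 1/2) (by norm_num))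
    rw [smul_add, smul_smul, smul_smul] at h
    norm_num at h
    exact h
  have hTA : ∀ v : Fin r → ℝ, T v = (LinearMap.toMatrix' T).mulVec v := fun v => by
    rw [← Matrix.toLin'_apply, Matrix.toLin'_toMatrix']
  let Re : (Fin r → ℂ) → (Fin r → ℝ) := fun w i => (w i).re
  have hRe : ∀ w, T (Re w) = Re (A.mulVec w) := by
    intro w
    rw [hTA]
    ext i
    simp [Re, hA, Matrix.mulVec, dotProduct]
  let ofR : (Fin r → ℝ) → (Fin r → ℂ) := fun v i => (v i : ℂ)
  have hofR : ∀ v, ofR (T v) = A.mulVec (ofR v) := by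
    intro v
    rw [hTA]
    ext i
    rw [hA]
    generalize LinearMap.toMatrix' T = M
    simp [ofR, Matrix.mulVec, dotProduct]
  have hofRn : ∀ v, ‖ofR v‖ = ‖v‖ := by
    intro v
    simp [ofR, Pi.norm_def]
  have hofRpow : ∀ (n : ℕ) v, ofR ((T ^ n) v) = (A ^ n).mulVec (ofR v) := by
    intro n v
    induction n with
    | zero => simp
    | succ n ih => rw [pow_succ', pow_succ', Module.End.mul_apply, hofR, ih, Matrix.mulVec_mulVec]
  obtain ⟨e, he⟩ := hint
  obtain ⟨δ, hδ, hball⟩ := Metric.isOpen_iff.1 isOpen_interior e he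
  -- eigenvector with nonzero real part
  obtain ⟨z₁, hz₁, hAz₁⟩ : ∃ z : Fin r → ℂ, Re z ≠ 0 ∧ A.mulVec z = μ • z := by
    by_cases h : Re z₀ = 0
    · refine ⟨Complex.I • z₀, ?_, ?_⟩
      · intro h'
        apply hz₀
        ext i
        have h1 := congrFun h i
        have h2 := congrFun h' i
        simp [Re] at h1 h2
        exact Complex.ext h1 h2
      · rw [Matrix.mulVec_smul, hAz₀, smul_comm]
    · exact ⟨z₀, h, hAz₀⟩
  obtain ⟨z, hz, hAz, hzn⟩ : ∃ z : Fin r → ℂ, Re z ≠ 0 ∧ A.mulVec z = μ • z ∧ ‖z‖ < δ := by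
    set a : ℝ := δ / (‖z₁‖ + 1) with ha
    have ha0 : 0 < a := by positivity
    refine ⟨(a : ℂ) • z₁, ?_, ?_, ?_⟩
    · intro h'
      apply hz₁
      ext i
      have h2 := congrFun h' i
      simp [Re] at h2
      exact h2.resolve_left ha0.ne'
    · rw [Matrix.mulVec_smul, hAz₁, smul_comm]
    · rw [norm_smul, Complex.norm_real, Real.norm_of_nonneg ha0.le, ha, div_mul_eq_mul_div,
        div_lt_iff₀ (by positivity)]
      nlinarith [norm_nonneg z₁]
  set x := Re z with hx
  have hReadd : ∀ w, ‖Re w‖ ≤ ‖w‖ := by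
    intro w
    rw [pi_norm_le_iff_of_nonneg (norm_nonneg _)]
    intro i
    exact (Complex.abs_re_le_norm (w i)).trans (norm_le_pi_norm w i)
  have key : ∀ (n : ℕ) (η : ℂ), ‖η‖ ≤ 1 → (T ^ n) e + Re ((η * μ ^ n) • z) ∈ C := by
    intro n η hη
    induction n with
    | zero =>
      apply interior_subset
      apply hball
      simp only [pow_zero, mul_one, Module.End.one_apply, Metric.mem_ball, dist_self_add_left]
      refine (hReadd _).trans_lt ?_
      rw [norm_smul]
      exact (mul_le_of_le_one_left (norm_nonneg _) hη).trans_lt hzn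
    | succ n ih =>
      have h := hT _ ih
      rw [map_add, hRe, Matrix.mulVec_smul, hAz, smul_smul] at h
      rw [pow_succ', Module.End.mul_apply, pow_succ, ← mul_assoc]
      exact h
  have key2 : ∀ (n : ℕ) (σ : ℝ), |σ| ≤ 1 → (T ^ n) e + (σ * ρ ^ n) • x ∈ C := by
    intro n σ hσ
    have h := key n (σ * ((ρ : ℂ) / μ) ^ n) (by
      rw [norm_mul, norm_pow, norm_div, Complex.norm_real, Complex.norm_real,
        Real.norm_of_nonneg hρ0, Real.norm_eq_abs]
      exact mul_le_one₀ hσ (by positivity) (pow_le_one₀ (by positivity) (div_self_le_one _)))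
    have h2 : (σ * ((ρ : ℂ) / μ) ^ n) * μ ^ n = ((σ * ρ ^ n : ℝ) : ℂ) := by
      rw [mul_assoc, ← mul_pow]
      by_cases h0 : μ = 0
      · simp [hρdef, h0]
      · rw [div_mul_cancel₀ _ h0]; push_cast; rfl
    rw [h2] at h
    convert h using 2
    ext i
    simp only [Re, hx, Pi.smul_apply, smul_eq_mul, Complex.re_ofReal_mul]
  -- partial sums
  let s : ℝ → ℕ → (Fin r → ℝ) := fun l N => ∑ n ∈ Finset.range N, (l⁻¹ ^ (n+1)) • (T ^ n) e
  let t : ℝ → ℕ → ℝ := fun l N => ∑ n ∈ Finset.range N, l⁻¹ ^ (n+1) * ρ ^ n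
  have hzero : (0 : Fin r → ℝ) ∈ C := by
    have : (0 : Fin r → ℝ) ∈ C ∩ (-C) := by rw [hpointed]; rfl
    exact this.1
  have hs : ∀ l : ℝ, 0 < l → ∀ N (σ : ℝ), |σ| ≤ 1 → s l N + (σ * t l N) • x ∈ C := by
    intro l hl N σ hσ
    induction N with
    | zero => simpa [s, t] using hzero
    | succ N ih =>
      have h := hadd _ ih _ (hcone (l⁻¹ ^ (N+1)) (by positivity) _ (key2 N σ hσ))
      convert h using 1
      simp only [s, t, Finset.sum_range_succ]
      module
  have htel : ∀ l : ℝ, 0 < l → ∀ N, T (s l N) = l • s l N - e + l⁻¹ ^ N • (T ^ N) e := by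
    intro l hl N
    induction N with
    | zero => simp [s]
    | succ N ih =>
      have e1 : s l (N+1) = s l N + (l⁻¹ ^ (N+1)) • (T ^ N) e := Finset.sum_range_succ _ _
      rw [e1, map_add, ih, map_smul, pow_succ' T, Module.End.mul_apply, smul_add, smul_smul,
        show l * l⁻¹ ^ (N+1) = l⁻¹ ^ N by rw [pow_succ]; field_simp]
      abel
  have httel : ∀ l : ℝ, 0 < l → ∀ N, (l - ρ) * t l N = 1 - (ρ / l) ^ N := by
    intro l hl N
    induction N with
    | zero => simp [t]
    | succ N ih =>
      have e1 : t l (N+1) = t l N + l⁻¹ ^ (N+1) * ρ ^ N := Finset.sum_range_succ _ _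
      rw [e1, mul_add, ih, pow_succ (ρ / l), div_pow, inv_pow, pow_succ l]
      field_simp
      ring
  -- separation
  obtain ⟨κ, hκ, hsep⟩ : ∃ κ > 0, ∀ w : Fin r → ℝ, w + x ∈ C → w - x ∈ C → κ ≤ ‖w‖ := by
    have hcl : IsClosed {w : Fin r → ℝ | w + x ∈ C ∧ w - x ∈ C} :=
      (hclosed.preimage (by fun_prop : Continuous fun w : Fin r → ℝ => w + x)).inter
        (hclosed.preimage (by fun_prop : Continuous fun w : Fin r → ℝ => w - x))
    have h0 : (0 : Fin r → ℝ) ∈ {w : Fin r → ℝ | w + x ∈ C ∧ w - x ∈ C}ᶜ := by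
      rintro ⟨h1, h2⟩
      have : x ∈ C ∩ (-C) := ⟨by simpa using h1, by simpa using h2⟩
      rw [hpointed] at this
      exact hz this
    obtain ⟨κ, hκ, hb⟩ := Metric.isOpen_iff.1 hcl.isOpen_compl 0 h0
    refine ⟨κ, hκ, fun w h1 h2 => ?_⟩
    by_contra hlt
    exact hb (show w ∈ Metric.ball 0 κ by simpa using hlt) ⟨h1, h2⟩
  -- approximate eigenvectors
  have happrox : ∀ d : ℝ, 0 < d → ∃ v ∈ C ∩ Metric.sphere 0 1,
      ‖T v - ρ • v‖ ≤ d * (1 + (‖e‖ + 1) * (2 / κ)) := by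
    intro d hd
    have hl : 0 < ρ + d := by positivity
    have hev1 := (hdecay (ρ + d) (by linarith) (ofR e)).eventually (ge_mem_nhds one_pos)
    have hev2 := (tendsto_pow_atTop_nhds_zero_of_lt_one (r := ρ / (ρ + d)) (by positivity)
        ((div_lt_one hl).2 (by linarith))).eventually (ge_mem_nhds (one_half_pos (α := ℝ)))
    obtain ⟨N, h1, h2⟩ := (hev1.and hev2).exists
    rw [← hofRpow, hofRn] at h1
    have ht := httel _ hl N
    rw [add_sub_cancel_left] at ht
    have ht2 : 1 / 2 ≤ d * t (ρ + d) N := by linarith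
    have ht0 : 0 < t (ρ + d) N := by
      by_contra hneg
      nlinarith
    have hp := hs _ hl N 1 (by simp)
    have hm := hs _ hl N (-1) (by simp)
    have hc := hs _ hl N 0 (by simp)
    have hTs := htel _ hl N
    generalize s (ρ + d) N = S at *
    generalize t (ρ + d) N = τ at *
    have hk : κ ≤ ‖τ⁻¹ • S‖ := by
      apply hsep
      · have := hcone τ⁻¹ (by positivity) _ hp
        rwa [one_mul, smul_add, smul_smul, inv_mul_cancel₀ ht0.ne', one_smul] at this
      · have := hcone τ⁻¹ (by positivity) _ hm
        rwa [smul_add, smul_smul, mul_left_comm, inv_mul_cancel₀ ht0.ne', mul_one, neg_one_smul,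
          ← sub_eq_add_neg] at this
    rw [norm_smul, norm_inv, Real.norm_of_nonneg ht0.le, inv_mul_eq_div, le_div_iff₀ ht0] at hk
    have hS0 : 0 < ‖S‖ := lt_of_lt_of_le (by positivity) hk
    have hSinv : ‖S‖⁻¹ ≤ d * (2 / κ) := by
      rw [inv_le_iff_one_le_mul₀ hS0, mul_assoc, ← mul_div_right_comm, ← mul_div_assoc,
        le_div_iff₀ hκ]
      nlinarith
    refine ⟨‖S‖⁻¹ • S, ⟨hcone _ (by positivity) _ (by simpa using hc), ?_⟩, ?_⟩
    · simp [norm_smul, hS0.ne']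
    · have heq : T (‖S‖⁻¹ • S) - ρ • (‖S‖⁻¹ • S) =
          d • (‖S‖⁻¹ • S) + ‖S‖⁻¹ • ((ρ + d)⁻¹ ^ N • (T ^ N) e - e) := by
        rw [map_smul, hTs]; module
      rw [heq]
      have hn1 : ‖d • (‖S‖⁻¹ • S)‖ = d := by
        rw [norm_smul, norm_smul, norm_inv, norm_norm, inv_mul_cancel₀ hS0.ne', mul_one,
          Real.norm_of_nonneg hd.le]
      have hn2 : ‖(ρ + d)⁻¹ ^ N • (T ^ N) e - e‖ ≤ ‖e‖ + 1 := by
        refine (norm_sub_le _ _).trans ?_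
        rw [norm_smul, Real.norm_of_nonneg (by positivity)]
        linarith
      have hn3 : ‖‖S‖⁻¹ • ((ρ + d)⁻¹ ^ N • (T ^ N) e - e)‖ ≤ d * (2 / κ) * (‖e‖ + 1) := by
        rw [norm_smul, norm_inv, norm_norm]
        gcongr
      refine (norm_add_le _ _).trans ?_
      rw [hn1]
      linarith
  have hcpt : IsCompact (C ∩ Metric.sphere (0 : Fin r → ℝ) 1) :=
    (isCompact_sphere _ _).inter_left hclosed
  have hTc : Continuous T := T.continuous_of_finiteDimensional
  obtain ⟨v₀, hv₀, -⟩ := happrox 1 one_pos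
  obtain ⟨v, hv, hmin⟩ := hcpt.exists_isMinOn ⟨v₀, hv₀⟩
    (f := fun v => ‖T v - ρ • v‖) (by fun_prop)
  refine ⟨v, hv.1, ?_, ?_⟩
  · rintro rfl
    simpa using hv.2
  · rw [← sub_eq_zero, ← norm_le_zero_iff]
    apply le_of_forall_pos_le_add
    intro ε hε
    have hK : 0 < 1 + (‖e‖ + 1) * (2 / κ) := by positivity
    obtain ⟨w, hw, hwε⟩ := happrox (ε / (1 + (‖e‖ + 1) * (2 / κ))) (by positivity)
    rw [div_mul_cancel₀ _ hK.ne'] at hwε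
    have := hmin hw
    simp only [Set.mem_ofPred_eq] at this
    linarith
end
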